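/- Soundness and completeness of KH^priv: for every formula φ ∈ L_KH^priv, φ is derivable in the axiom system KH^priv if and only if φ is valid on the class KH. (This may assume, as given, that the base system KH is sound and complete for KH with respect to the update-free language L_KH.) -/

import Mathlib

/-- A Kripke model (raw data): valuation, and knowledge and hope relations for `n` agents. -/
structure Model (n : ℕ) (W : Type) where
  val : ℕ → W → Prop
  K : Fin n → W → W → Prop
  H : Fin n → W → W → Prop

/-- Membership in the class KH: each `K i` is an equivalence relation, each `H i` is
shift-serial, `H i ⊆ K i` (HinK), and oneH. -/
def Model.KH {n : ℕ} {W : Type} (M : Model n W) : Prop :=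
  (∀ i, Equivalence (M.K i)) ∧
  (∀ i w v, M.H i w v → ∃ z, M.H i v z) ∧
  (∀ i w v, M.H i w v → M.K i w v) ∧
  (∀ i w v, (∃ x, M.H i w x) → (∃ x, M.H i v x) → M.K i w v → M.H i w v)

/-- Formulas of the language `L_KH^priv`: atoms, negation, conjunction, knowledge,
hope, and private hope updates `[U,e]φ`, where the pointed hope update model `(U,e)`
consists of a finite nonempty set of actions `Fin m`, a hope update function
`ϑ : Fin m → Fin n → Form`, equivalence relations `K^U_i` on actions,
and a designated action `e : Fin m`. -/
inductive Form (n : ℕ) : Type where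
  | atom : ℕ → Form n
  | neg : Form n → Form n
  | and : Form n → Form n → Form n
  | know : Fin n → Form n → Form n
  | hope : Fin n → Form n → Form n
  | upd : (m : ℕ) → (ϑ : Fin m → Fin n → Form n) →
      (KU : Fin n → Fin m → Fin m → Prop) → (∀ i, Equivalence (KU i)) →
      Fin m → Form n → Form n

/-- A hope update model, packaged: actions `Fin m`, hope update formulas `ϑ e i`,
and equivalence relations `KU i` on actions. -/
structure UpdModel (n m : ℕ) where
  ϑ : Fin m → Fin n → Form n
  KU : Fin n → Fin m → Fin m → Prop
  equiv : ∀ i, Equivalence (KU i)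

/-- The formula `[U,e]φ`. -/
def Form.updM {n m : ℕ} (U : UpdModel n m) (e : Fin m) (φ : Form n) : Form n :=
  .upd m U.ϑ U.KU U.equiv e φ

/-- The product update `M × U` (with the hope update formulas given semantically as
predicates `ϑc e i : W → Prop`). -/
def Model.prodRaw {n : ℕ} {W : Type} {m : ℕ} (M : Model n W)
    (ϑc : Fin m → Fin n → W → Prop) (KU : Fin n → Fin m → Fin m → Prop) :
    Model n (W × Fin m) where
  val := fun p x => M.val p x.1
  K := fun i x y => M.K i x.1 y.1 ∧ KU i x.2 y.2
  H := fun i x y => (M.K i x.1 y.1 ∧ KU i x.2 y.2) ∧ ϑc x.2 i x.1 ∧ ϑc y.2 i y.1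

/-- Truth at a world. -/
def sat {n : ℕ} : Form n → {W : Type} → Model n W → W → Prop
  | .atom p, _, M, w => M.val p w
  | .neg φ, _, M, w => ¬ sat φ M w
  | .and φ ψ, _, M, w => sat φ M w ∧ sat ψ M w
  | .know i φ, _, M, w => ∀ v, M.K i w v → sat φ M v
  | .hope i φ, _, M, w => ∀ v, M.H i w v → sat φ M v
  | .upd _ ϑ KU _ e ψ, _, M, w =>
      sat ψ (M.prodRaw (fun f i v => sat (ϑ f i) M v) KU) (w, e)

/-- The product update `M × U`. -/
def Model.prodU {n : ℕ} {W : Type} {m : ℕ} (M : Model n W) (U : UpdModel n m) :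
    Model n (W × Fin m) :=
  M.prodRaw (fun f i v => sat (U.ϑ f i) M v) U.KU

def ftop {n : ℕ} : Form n := .neg (.and (.atom 0) (.neg (.atom 0)))
def fbot {n : ℕ} : Form n := .neg ftop
def fimpl {n : ℕ} (φ ψ : Form n) : Form n := .neg (.and φ (.neg ψ))
def forr {n : ℕ} (φ ψ : Form n) : Form n := .neg (.and (.neg φ) (.neg ψ))
def fiff {n : ℕ} (φ ψ : Form n) : Form n := .and (fimpl φ ψ) (fimpl ψ φ)
def fcorrect {n : ℕ} (i : Fin n) : Form n := .neg (.hope i fbot)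

/-- Validity on the class KH. -/
def Valid {n : ℕ} (φ : Form n) : Prop :=
  ∀ (W : Type) (M : Model n W), Nonempty W → M.KH → ∀ w : W, sat φ M w


/-- Composition `U ; U'` of hope update models: actions `E × E'` (coded as
`Fin (m * m')` via `finProdFinEquiv`), hope update formulas
`ϑ''_i((e,e')) = [U,e]ϑ'_i(e')`, and the product of the action relations. -/
def UpdModel.comp {n m m' : ℕ} (U : UpdModel n m) (U' : UpdModel n m') :
    UpdModel n (m * m') where
  ϑ := fun x i =>
    Form.updM U (finProdFinEquiv.symm x).1 (U'.ϑ (finProdFinEquiv.symm x).2 i)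
  KU := fun i x y =>
    U.KU i (finProdFinEquiv.symm x).1 (finProdFinEquiv.symm y).1 ∧
    U'.KU i (finProdFinEquiv.symm x).2 (finProdFinEquiv.symm y).2
  equiv := fun i =>
    ⟨fun _ => ⟨(U.equiv i).refl _, (U'.equiv i).refl _⟩,
     fun h => ⟨(U.equiv i).symm h.1, (U'.equiv i).symm h.2⟩,
     fun h h' => ⟨(U.equiv i).trans h.1 h'.1, (U'.equiv i).trans h.2 h'.2⟩⟩

/-- Conjunction of a list of formulas. -/
def bigAnd {n : ℕ} : List (Form n) → Form n
  | [] => ftop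
  | φ :: l => .and φ (bigAnd l)

/-- The conjunction `⋀_{f : e K^U_i f} g f` over all actions `f` related to `e`. -/
noncomputable def actConj {n m : ℕ} (KU : Fin n → Fin m → Fin m → Prop)
    (i : Fin n) (e : Fin m) (g : Fin m → Form n) : Form n :=
  bigAnd (((List.finRange m).filter
    (fun f => @decide (KU i e f) (Classical.dec _))).map g)

/-- `φ` is a propositional tautology: true under every assignment of truth values to
formulas respecting negation and conjunction. -/
def Tautology {n : ℕ} (φ : Form n) : Prop :=
  ∀ v : Form n → Prop,
    (∀ ψ, v (.neg ψ) ↔ ¬ v ψ) → (∀ ψ χ, v (.and ψ χ) ↔ (v ψ ∧ v χ)) → v φ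

/-- The axiom system `KH^priv`: the base system `KH` extended with the reduction
axioms for private hope updates. -/
inductive DerivPriv {n : ℕ} : Form n → Prop where
  | taut {φ} : Tautology φ → DerivPriv φ
  | hdag (i : Fin n) : DerivPriv (.hope i (.neg (.hope i fbot)))
  | kK (i : Fin n) (φ ψ : Form n) :
      DerivPriv (fimpl (.and (.know i (fimpl φ ψ)) (.know i φ)) (.know i ψ))
  | fourK (i : Fin n) (φ : Form n) : DerivPriv (fimpl (.know i φ) (.know i (.know i φ)))
  | fiveK (i : Fin n) (φ : Form n) :
      DerivPriv (fimpl (.neg (.know i φ)) (.know i (.neg (.know i φ))))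
  | tK (i : Fin n) (φ : Form n) : DerivPriv (fimpl (.know i φ) φ)
  | kh (i : Fin n) (φ : Form n) :
      DerivPriv (fiff (.hope i φ) (fimpl (fcorrect i) (.know i (fimpl (fcorrect i) φ))))
  | mp {φ ψ : Form n} : DerivPriv (fimpl φ ψ) → DerivPriv φ → DerivPriv ψ
  | necK {φ : Form n} (i : Fin n) : DerivPriv φ → DerivPriv (.know i φ)
  | redAtom {m : ℕ} (U : UpdModel n m) (e : Fin m) (p : ℕ) :
      DerivPriv (fiff (Form.updM U e (.atom p)) (.atom p))
  | redNeg {m : ℕ} (U : UpdModel n m) (e : Fin m) (φ : Form n) :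
      DerivPriv (fiff (Form.updM U e (.neg φ)) (.neg (Form.updM U e φ)))
  | redAnd {m : ℕ} (U : UpdModel n m) (e : Fin m) (φ ψ : Form n) :
      DerivPriv (fiff (Form.updM U e (.and φ ψ))
        (.and (Form.updM U e φ) (Form.updM U e ψ)))
  | redKnow {m : ℕ} (U : UpdModel n m) (e : Fin m) (i : Fin n) (φ : Form n) :
      DerivPriv (fiff (Form.updM U e (.know i φ))
        (actConj U.KU i e (fun f => .know i (Form.updM U f φ))))
  | redHope {m : ℕ} (U : UpdModel n m) (e : Fin m) (i : Fin n) (φ : Form n) :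
      DerivPriv (fiff (Form.updM U e (.hope i φ))
        (fimpl (U.ϑ e i)
          (actConj U.KU i e
            (fun f => .know i (fimpl (U.ϑ f i) (Form.updM U f φ))))))
  | redComp {m m' : ℕ} (U : UpdModel n m) (U' : UpdModel n m') (e : Fin m)
      (e' : Fin m') (φ : Form n) :
      DerivPriv (fiff (Form.updM U e (Form.updM U' e' φ))
        (Form.updM (U.comp U') (finProdFinEquiv (e, e')) φ))

/-- The base axiom system `KH` (propositional tautologies, `H†`, `K^K`, `4^K`, `5^K`,
`T^K`, the `KH` axiom, modus ponens, and necessitation for `K_i`). -/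
inductive DerivKH {n : ℕ} : Form n → Prop where
  | taut {φ} : Tautology φ → DerivKH φ
  | hdag (i : Fin n) : DerivKH (.hope i (.neg (.hope i fbot)))
  | kK (i : Fin n) (φ ψ : Form n) :
      DerivKH (fimpl (.and (.know i (fimpl φ ψ)) (.know i φ)) (.know i ψ))
  | fourK (i : Fin n) (φ : Form n) : DerivKH (fimpl (.know i φ) (.know i (.know i φ)))
  | fiveK (i : Fin n) (φ : Form n) :
      DerivKH (fimpl (.neg (.know i φ)) (.know i (.neg (.know i φ))))
  | tK (i : Fin n) (φ : Form n) : DerivKH (fimpl (.know i φ) φ)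
  | kh (i : Fin n) (φ : Form n) :
      DerivKH (fiff (.hope i φ) (fimpl (fcorrect i) (.know i (fimpl (fcorrect i) φ))))
  | mp {φ ψ : Form n} : DerivKH (fimpl φ ψ) → DerivKH φ → DerivKH ψ
  | necK {φ : Form n} (i : Fin n) : DerivKH φ → DerivKH (.know i φ)

/-- Update-free formulas: the sublanguage `L_KH` of `L_KH^priv`. -/
inductive UpdFree {n : ℕ} : Form n → Prop where
  | atom (p : ℕ) : UpdFree (.atom p)
  | neg {φ} : UpdFree φ → UpdFree (.neg φ)
  | and {φ ψ} : UpdFree φ → UpdFree ψ → UpdFree (.and φ ψ)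
  | know {φ} (i : Fin n) : UpdFree φ → UpdFree (.know i φ)
  | hope {φ} (i : Fin n) : UpdFree φ → UpdFree (.hope i φ)

/-!
The reduction axioms let one push an update `[U,e]` through every connective of `L_KH`, and the
composition axiom merges it with an update occurring directly below it. Hence every formula is
provably equivalent to an update-free one, and completeness is inherited from the base system.
Soundness needs two observations: on the class KH the hope relations are determined by knowledge
and correctness, which validates the axiom `KH` and mirrors the definition of the product update;
and truth is invariant under isomorphism, which reduces the composition axiom to the associativity
of products, `(M × U) × U' ≅ M × (U ; U')`.
-/

section

variable {n m m' : ℕ} {W W' : Type}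

/-! ### Boolean valuations and truth -/

/-- A Boolean valuation: an assignment of truth values to all formulas that respects negation and
conjunction, as in the definition of `Tautology`; all other formulas are treated as atoms. -/
structure IsBooleanValuation (v : Form n → Prop) : Prop where
  neg (φ : Form n) : v (.neg φ) ↔ ¬ v φ
  and (φ ψ : Form n) : v (.and φ ψ) ↔ v φ ∧ v ψ

namespace IsBooleanValuation

variable {v : Form n → Prop} {φ ψ : Form n}

theorem fimpl_iff (hv : IsBooleanValuation v) : v (fimpl φ ψ) ↔ (v φ → v ψ) := by
  simp only [fimpl, hv.neg, hv.and, not_and, not_not]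

theorem fiff_iff (hv : IsBooleanValuation v) : v (fiff φ ψ) ↔ (v φ ↔ v ψ) := by
  simp only [fiff, hv.and, hv.fimpl_iff, iff_iff_implies_and_implies]

theorem map_ftop (hv : IsBooleanValuation v) : v ftop := by
  simp only [ftop, hv.neg, hv.and, and_not_self_iff, not_false_eq_true]

end IsBooleanValuation

theorem isBooleanValuation_sat (M : Model n W) (w : W) : IsBooleanValuation (sat · M w) :=
  ⟨fun _ => Iff.rfl, fun _ _ => Iff.rfl⟩

section Truth

variable {M : Model n W} {w : W}

theorem sat_fimpl {φ ψ : Form n} : sat (fimpl φ ψ) M w ↔ (sat φ M w → sat ψ M w) :=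
  (isBooleanValuation_sat M w).fimpl_iff

theorem sat_fiff {φ ψ : Form n} : sat (fiff φ ψ) M w ↔ (sat φ M w ↔ sat ψ M w) :=
  (isBooleanValuation_sat M w).fiff_iff

theorem not_sat_fbot : ¬ sat fbot M w :=
  not_not_intro (isBooleanValuation_sat M w).map_ftop

theorem sat_fcorrect {i : Fin n} : sat (fcorrect i) M w ↔ ∃ v, M.H i w v := by
  simp only [fcorrect, sat, not_sat_fbot, imp_false, not_forall, not_not]

theorem sat_bigAnd {l : List (Form n)} : sat (bigAnd l) M w ↔ ∀ φ ∈ l, sat φ M w := by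
  induction l with
  | nil => exact iff_of_true (isBooleanValuation_sat M w).map_ftop (List.forall_mem_nil _)
  | cons φ l ih => simp only [bigAnd, sat, ih, List.forall_mem_cons]

theorem sat_actConj {KU : Fin n → Fin m → Fin m → Prop} {i : Fin n} {e : Fin m}
    {g : Fin m → Form n} :
    sat (actConj KU i e g) M w ↔ ∀ f, KU i e f → sat (g f) M w := by
  simp [actConj, sat_bigAnd]

end Truth

/-! ### The class KH -/

namespace Model.KH

variable {M : Model n W} {i : Fin n} {w v : W}

theorem equivalence_K (hM : M.KH) (i : Fin n) : Equivalence (M.K i) := hM.1 i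

theorem sat_fcorrect_of_H (hM : M.KH) (h : M.H i w v) : sat (fcorrect i) M v :=
  sat_fcorrect.2 (hM.2.1 i w v h)

theorem H_iff (hM : M.KH) :
    M.H i w v ↔ M.K i w v ∧ sat (fcorrect i) M w ∧ sat (fcorrect i) M v where
  mp h := ⟨hM.2.2.1 i w v h, sat_fcorrect.2 ⟨v, h⟩, hM.sat_fcorrect_of_H h⟩
  mpr := fun ⟨hK, hw, hv⟩ => hM.2.2.2 i w v (sat_fcorrect.1 hw) (sat_fcorrect.1 hv) hK

theorem sat_hope_iff (hM : M.KH) {φ : Form n} :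
    sat (.hope i φ) M w ↔
      sat (fimpl (fcorrect i) (.know i (fimpl (fcorrect i) φ))) M w := by
  simp only [sat_fimpl, sat, hM.H_iff]
  exact ⟨fun h hw v hK hv => h v ⟨hK, hw, hv⟩, fun h v ⟨hK, hw, hv⟩ => h hw v hK hv⟩

end Model.KH

/-! ### Invariance under isomorphism -/

theorem UpdModel.comp_ϑ (U : UpdModel n m) (U' : UpdModel n m') (e : Fin m) (e' : Fin m')
    (i : Fin n) : (U.comp U').ϑ (finProdFinEquiv (e, e')) i = .updM U e (U'.ϑ e' i) := by
  simp only [comp, Equiv.symm_apply_apply]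

theorem UpdModel.comp_KU_iff (U : UpdModel n m) (U' : UpdModel n m') (i : Fin n)
    (e f : Fin m) (e' f' : Fin m') :
    (U.comp U').KU i (finProdFinEquiv (e, e')) (finProdFinEquiv (f, f')) ↔
      U.KU i e f ∧ U'.KU i e' f' := by
  simp only [comp, Equiv.symm_apply_apply]

namespace Model

/-- An isomorphism of Kripke models: a bijection of worlds preserving and reflecting the valuation
and both families of relations. -/
structure Iso (M : Model n W) (M' : Model n W') extends W ≃ W' where
  val_iff (p : ℕ) (w : W) : M.val p w ↔ M'.val p (toEquiv w)
  K_iff (i : Fin n) (w v : W) : M.K i w v ↔ M'.K i (toEquiv w) (toEquiv v)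
  H_iff (i : Fin n) (w v : W) : M.H i w v ↔ M'.H i (toEquiv w) (toEquiv v)

/-- The isomorphism of product updates induced by an isomorphism of models that respects the
hope update predicates. -/
def Iso.prodRaw {M : Model n W} {M' : Model n W'} (σ : M.Iso M')
    {ϑ : Fin m → Fin n → W → Prop} {ϑ' : Fin m → Fin n → W' → Prop}
    (hϑ : ∀ e i w, ϑ e i w ↔ ϑ' e i (σ.toEquiv w)) (KU : Fin n → Fin m → Fin m → Prop) :
    (M.prodRaw ϑ KU).Iso (M'.prodRaw ϑ' KU) where
  toEquiv := σ.toEquiv.prodCongr (Equiv.refl _)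
  val_iff p x := σ.val_iff p x.1
  K_iff i x y := and_congr_left' (σ.K_iff i x.1 y.1)
  H_iff i x y := and_congr (and_congr_left' (σ.K_iff i x.1 y.1))
    (and_congr (hϑ x.2 i x.1) (hϑ y.2 i y.1))

theorem Iso.sat_iff {M : Model n W} {M' : Model n W'} (σ : M.Iso M') (φ : Form n) (w : W) :
    sat φ M w ↔ sat φ M' (σ.toEquiv w) := by
  induction φ generalizing W W' with
  | atom p => exact σ.val_iff p w
  | neg φ ih => exact not_congr (ih σ w)
  | and φ ψ ihφ ihψ => exact and_congr (ihφ σ w) (ihψ σ w)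
  | know i φ ih => exact σ.toEquiv.forall_congr fun v => imp_congr (σ.K_iff i w v) (ih σ v)
  | hope i φ ih => exact σ.toEquiv.forall_congr fun v => imp_congr (σ.H_iff i w v) (ih σ v)
  | upd m ϑ KU _ e _ ihϑ ih => exact ih (σ.prodRaw (fun f i v => ihϑ f i σ v) KU) (w, e)

/-- Associativity of the product update, `(M × U) × U' ≅ M × (U ; U')`, with the actions
`E × E'` of the composition coded by `finProdFinEquiv`. -/
def prodCompIso (M : Model n W) (U : UpdModel n m) (U' : UpdModel n m') :
    ((M.prodU U).prodU U').Iso (M.prodU (U.comp U')) where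
  toEquiv := (Equiv.prodAssoc _ _ _).trans ((Equiv.refl W).prodCongr finProdFinEquiv)
  val_iff _ _ := Iff.rfl
  K_iff i x y := and_assoc.trans <|
    and_congr_right' (U.comp_KU_iff U' i x.1.2 y.1.2 x.2 y.2).symm
  H_iff := by
    rintro i ⟨⟨w, e⟩, e'⟩ ⟨⟨v, f⟩, f'⟩
    change ((M.K i w v ∧ U.KU i e f) ∧ U'.KU i e' f') ∧
        sat (.updM U e (U'.ϑ e' i)) M w ∧ sat (.updM U f (U'.ϑ f' i)) M v ↔
      (M.K i w v ∧ (U.comp U').KU i (finProdFinEquiv (e, e')) (finProdFinEquiv (f, f'))) ∧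
        sat ((U.comp U').ϑ (finProdFinEquiv (e, e')) i) M w ∧
        sat ((U.comp U').ϑ (finProdFinEquiv (f, f')) i) M v
    rw [U.comp_KU_iff, U.comp_ϑ, U.comp_ϑ, and_assoc (a := M.K i w v)]

end Model

/-! ### Soundness -/

section Reduction

variable {M : Model n W} {w : W} {U : UpdModel n m} {e : Fin m}

theorem sat_updM_know {i : Fin n} {φ : Form n} :
    sat (.updM U e (.know i φ)) M w ↔
      sat (actConj U.KU i e fun f => .know i (.updM U f φ)) M w := by
  rw [sat_actConj]
  exact ⟨fun h f hf v hv => h (v, f) ⟨hv, hf⟩, fun h ⟨v, f⟩ ⟨hv, hf⟩ => h f hf v hv⟩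

theorem sat_updM_hope {i : Fin n} {φ : Form n} :
    sat (.updM U e (.hope i φ)) M w ↔
      sat (fimpl (U.ϑ e i)
        (actConj U.KU i e fun f => .know i (fimpl (U.ϑ f i) (.updM U f φ)))) M w := by
  simp only [sat_fimpl, sat_actConj, sat]
  exact ⟨fun h he f hef v hv hf => h (v, f) ⟨⟨hv, hef⟩, he, hf⟩,
    fun h ⟨v, f⟩ ⟨⟨hv, hef⟩, he, hf⟩ => h he f hef v hv hf⟩

theorem sat_updM_updM {U' : UpdModel n m'} {e' : Fin m'} {φ : Form n} :
    sat (.updM U e (.updM U' e' φ)) M w ↔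
      sat (.updM (U.comp U') (finProdFinEquiv (e, e')) φ) M w :=
  (M.prodCompIso U U').sat_iff φ ((w, e), e')

end Reduction

theorem Valid.mp {φ ψ : Form n} (hφψ : Valid (fimpl φ ψ)) (hφ : Valid φ) : Valid ψ :=
  fun W M hW hM w => sat_fimpl.1 (hφψ W M hW hM w) (hφ W M hW hM w)

theorem DerivPriv.valid {φ : Form n} (h : DerivPriv φ) : Valid φ := by
  induction h with
  | mp _ _ ih₁ ih₂ => exact ih₁.mp ih₂
  | necK i _ ih => exact fun W M hW hM _ v _ => ih W M hW hM v
  | taut h => exact fun _ M _ _ w => h (sat · M w) (fun _ => Iff.rfl) fun _ _ => Iff.rfl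
  | hdag i => exact fun _ M _ hM w v hwv => hM.sat_fcorrect_of_H hwv
  | kK i φ ψ =>
    exact fun _ M _ _ w => sat_fimpl.2 fun ⟨hφψ, hφ⟩ v hwv =>
      sat_fimpl.1 (hφψ v hwv) (hφ v hwv)
  | fourK i φ =>
    exact fun _ M _ hM w => sat_fimpl.2 fun hφ v hwv u hvu =>
      hφ u ((hM.equivalence_K i).trans hwv hvu)
  | fiveK i φ =>
    exact fun _ M _ hM w => sat_fimpl.2 fun hφ v hwv hv => hφ fun u hwu =>
      hv u ((hM.equivalence_K i).trans ((hM.equivalence_K i).symm hwv) hwu)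
  | tK i φ => exact fun _ M _ hM w => sat_fimpl.2 fun hφ => hφ w ((hM.equivalence_K i).refl w)
  | kh i φ => exact fun _ M _ hM w => sat_fiff.2 hM.sat_hope_iff
  | redAtom U e p => exact fun _ M _ _ w => sat_fiff.2 Iff.rfl
  | redNeg U e φ => exact fun _ M _ _ w => sat_fiff.2 Iff.rfl
  | redAnd U e φ ψ => exact fun _ M _ _ w => sat_fiff.2 Iff.rfl
  | redKnow U e i φ => exact fun _ M _ _ w => sat_fiff.2 sat_updM_know
  | redHope U e i φ => exact fun _ M _ _ w => sat_fiff.2 sat_updM_hope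
  | redComp U U' e e' φ => exact fun _ M _ _ w => sat_fiff.2 sat_updM_updM

/-! ### Provable equivalence -/

theorem DerivKH.derivPriv {φ : Form n} (h : DerivKH φ) : DerivPriv φ := by
  induction h with
  | taut h => exact .taut h
  | hdag i => exact .hdag i
  | kK i φ ψ => exact .kK i φ ψ
  | fourK i φ => exact .fourK i φ
  | fiveK i φ => exact .fiveK i φ
  | tK i φ => exact .tK i φ
  | kh i φ => exact .kh i φ
  | mp _ _ ih₁ ih₂ => exact .mp ih₁ ih₂
  | necK i _ ih => exact .necK i ih

namespace DerivPriv

variable {φ φ' ψ ψ' χ : Form n}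

theorem of_consequence (hφ : DerivPriv φ)
    (h : ∀ v, IsBooleanValuation v → v φ → v ψ) : DerivPriv ψ :=
  .mp (.taut fun v hneg hand =>
    have hv : IsBooleanValuation v := ⟨hneg, hand⟩
    hv.fimpl_iff.2 (h v hv)) hφ

theorem and_intro (hφ : DerivPriv φ) (hψ : DerivPriv ψ) : DerivPriv (.and φ ψ) :=
  .mp (hφ.of_consequence fun _ hv hvφ => hv.fimpl_iff.2 fun hvψ => (hv.and φ ψ).2 ⟨hvφ, hvψ⟩) hψ

theorem of_consequence₂ (hφ : DerivPriv φ) (hψ : DerivPriv ψ)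
    (h : ∀ v, IsBooleanValuation v → v φ → v ψ → v χ) : DerivPriv χ :=
  (hφ.and_intro hψ).of_consequence fun v hv hvφψ =>
    have ⟨hvφ, hvψ⟩ := (hv.and φ ψ).1 hvφψ
    h v hv hvφ hvψ

theorem fiff_refl (φ : Form n) : DerivPriv (fiff φ φ) :=
  .taut fun _ hneg hand => IsBooleanValuation.fiff_iff ⟨hneg, hand⟩ |>.2 Iff.rfl

theorem fiff_trans (h : DerivPriv (fiff φ ψ)) (h' : DerivPriv (fiff ψ χ)) :
    DerivPriv (fiff φ χ) :=
  h.of_consequence₂ h' fun _ hv hφψ hψχ =>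
    hv.fiff_iff.2 ((hv.fiff_iff.1 hφψ).trans (hv.fiff_iff.1 hψχ))

theorem fiff_mp (h : DerivPriv (fiff φ ψ)) : DerivPriv (fimpl φ ψ) :=
  h.of_consequence fun _ hv hφψ => hv.fimpl_iff.2 (hv.fiff_iff.1 hφψ).1

theorem fiff_mpr (h : DerivPriv (fiff φ ψ)) : DerivPriv (fimpl ψ φ) :=
  h.of_consequence fun _ hv hφψ => hv.fimpl_iff.2 (hv.fiff_iff.1 hφψ).2

theorem neg_congr (h : DerivPriv (fiff φ ψ)) : DerivPriv (fiff (.neg φ) (.neg ψ)) :=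
  h.of_consequence fun _ hv hφψ => hv.fiff_iff.2 <| by
    rw [hv.neg, hv.neg, hv.fiff_iff.1 hφψ]

theorem and_congr (hφ : DerivPriv (fiff φ φ')) (hψ : DerivPriv (fiff ψ ψ')) :
    DerivPriv (fiff (.and φ ψ) (.and φ' ψ')) :=
  hφ.of_consequence₂ hψ fun _ hv hvφ hvψ => hv.fiff_iff.2 <| by
    rw [hv.and, hv.and, hv.fiff_iff.1 hvφ, hv.fiff_iff.1 hvψ]

theorem know_mono (i : Fin n) (h : DerivPriv (fimpl φ ψ)) :
    DerivPriv (fimpl (.know i φ) (.know i ψ)) :=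
  (kK i φ ψ).of_consequence₂ (necK i h) fun _ hv hK hφψ => hv.fimpl_iff.2 fun hφ =>
    hv.fimpl_iff.1 hK ((hv.and _ _).2 ⟨hφψ, hφ⟩)

theorem know_congr (i : Fin n) (h : DerivPriv (fiff φ ψ)) :
    DerivPriv (fiff (.know i φ) (.know i ψ)) :=
  (know_mono i h.fiff_mp).and_intro (know_mono i h.fiff_mpr)

end DerivPriv

/-! ### Reduction to update-free formulas -/

/-- A formula is update-reducible if `KH^priv` proves it equivalent to a formula of `L_KH`. -/
def UpdReducible (φ : Form n) : Prop :=
  ∃ ψ, UpdFree ψ ∧ DerivPriv (fiff φ ψ)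

theorem UpdFree.updReducible {φ : Form n} (h : UpdFree φ) : UpdReducible φ :=
  ⟨φ, h, .fiff_refl φ⟩

theorem updFree_ftop : UpdFree (ftop : Form n) :=
  .neg (.and (.atom 0) (.neg (.atom 0)))

theorem updFree_fcorrect (i : Fin n) : UpdFree (fcorrect i) :=
  .neg (.hope i (.neg updFree_ftop))

namespace UpdReducible

variable {φ ψ : Form n}

theorem of_fiff (h : DerivPriv (fiff φ ψ)) : UpdReducible ψ → UpdReducible φ
  | ⟨χ, hχ, hψχ⟩ => ⟨χ, hχ, h.fiff_trans hψχ⟩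

theorem neg : UpdReducible φ → UpdReducible (.neg φ)
  | ⟨φ', hφ', h⟩ => ⟨.neg φ', .neg hφ', h.neg_congr⟩

theorem and : UpdReducible φ → UpdReducible ψ → UpdReducible (.and φ ψ)
  | ⟨φ', hφ', hφ⟩, ⟨ψ', hψ', hψ⟩ => ⟨.and φ' ψ', .and hφ' hψ', hφ.and_congr hψ⟩

theorem fimpl (hφ : UpdReducible φ) (hψ : UpdReducible ψ) : UpdReducible (fimpl φ ψ) :=
  (hφ.and hψ.neg).neg

theorem know (i : Fin n) : UpdReducible φ → UpdReducible (.know i φ)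
  | ⟨φ', hφ', h⟩ => ⟨.know i φ', .know i hφ', h.know_congr i⟩

-- `H_i` has no congruence rule of its own; the axiom `KH` expresses it through `K_i`.
theorem hope (i : Fin n) (hφ : UpdReducible φ) : UpdReducible (.hope i φ) :=
  have hcorrect : UpdReducible (fcorrect i) := (updFree_fcorrect i).updReducible
  of_fiff (.kh i φ) (hcorrect.fimpl ((hcorrect.fimpl hφ).know i))

theorem bigAnd {l : List (Form n)} (h : ∀ φ ∈ l, UpdReducible φ) : UpdReducible (bigAnd l) := by
  induction l with
  | nil => exact updFree_ftop.updReducible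
  | cons φ l ih =>
    have ⟨hφ, hl⟩ := List.forall_mem_cons.1 h
    exact hφ.and (ih hl)

theorem actConj {g : Fin m → Form n} (h : ∀ f, UpdReducible (g f))
    (KU : Fin n → Fin m → Fin m → Prop) (i : Fin n) (e : Fin m) :
    UpdReducible (actConj KU i e g) :=
  bigAnd <| List.forall_mem_map.2 fun f _ => h f

theorem updM {U : UpdModel n m} (hU : ∀ e i, UpdReducible (U.ϑ e i)) (e : Fin m) (φ : Form n) :
    UpdReducible (.updM U e φ) := by
  induction φ generalizing m with
  | atom p => exact of_fiff (.redAtom U e p) (UpdFree.atom p).updReducible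
  | neg φ ih => exact of_fiff (.redNeg U e φ) (ih hU e).neg
  | and φ ψ ihφ ihψ => exact of_fiff (.redAnd U e φ ψ) ((ihφ hU e).and (ihψ hU e))
  | know i φ ih =>
    exact of_fiff (.redKnow U e i φ) (actConj (fun f => (ih hU f).know i) U.KU i e)
  | hope i φ ih =>
    exact of_fiff (.redHope U e i φ) <|
      (hU e i).fimpl (actConj (fun f => ((hU f i).fimpl (ih hU f)).know i) U.KU i e)
  | upd m' ϑ KU hKU e' φ ihϑ ih =>
    let U' : UpdModel n m' := ⟨ϑ, KU, hKU⟩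
    have hcomp : ∀ x i, UpdReducible ((U.comp U').ϑ x i) := fun x i => ihϑ _ i hU _
    exact of_fiff (.redComp U U' e e' φ) (ih hcomp _)

end UpdReducible

theorem updReducible (φ : Form n) : UpdReducible φ := by
  induction φ with
  | atom p => exact (UpdFree.atom p).updReducible
  | neg φ ih => exact ih.neg
  | and φ ψ ihφ ihψ => exact ihφ.and ihψ
  | know i φ ih => exact ih.know i
  | hope i φ ih => exact ih.hope i
  | upd m ϑ KU hKU e φ ihϑ _ => exact UpdReducible.updM (U := ⟨ϑ, KU, hKU⟩) ihϑ e φ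

end

/-- soundness and completeness of `KH^priv`: a formula of `L_KH^priv` is
derivable in `KH^priv` iff it is valid on the class KH. The hypothesis `hbase` is the
given soundness and completeness of the base system `KH` for the update-free
language `L_KH`. -/
theorem khpriv_sound_complete {n : ℕ} (hn : 0 < n)
    (hbase : ∀ φ : Form n, UpdFree φ → (DerivKH φ ↔ Valid φ)) :
    ∀ φ : Form n, DerivPriv φ ↔ Valid φ := by
  intro φ
  refine ⟨DerivPriv.valid, fun hφ => ?_⟩
  obtain ⟨ψ, hψ, hφψ⟩ := updReducible φ
  have hψ_valid : Valid ψ := hφψ.fiff_mp.valid.mp hφ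
  have hψ_deriv : DerivPriv ψ := ((hbase ψ hψ).2 hψ_valid).derivPriv
  exact hφψ.fiff_mpr.mp hψ_deriv
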